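/- For every real V>10⁶, one has f(V)<0, where f(V)=−(3/2)·V·ω̃₊(1/V)³−1. -/

import Mathlib

/-- z₀(G) = 32G³+27G²+3√3·√(27G⁴+64G⁵). -/
noncomputable def z₀ (G : ℝ) : ℝ :=
  32 * G ^ 3 + 27 * G ^ 2 + 3 * Real.sqrt 3 * Real.sqrt (27 * G ^ 4 + 64 * G ^ 5)

/-- z₁(G) = 2^{5/3}·G·z₀(G)^{−1/3}. -/
noncomputable def z₁ (G : ℝ) : ℝ :=
  (2 : ℝ) ^ ((5 : ℝ) / 3) * G * (z₀ G) ^ (-(1 : ℝ) / 3)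

/-- y₀(G) = (2G/3)·(1+z₁(G)+z₁(G)⁻¹), a root of the resolvent cubic. -/
noncomputable def y₀ (G : ℝ) : ℝ :=
  (2 * G / 3) * (1 + z₁ G + (z₁ G)⁻¹)

/-- The quartic P_G(k)=k⁴−2Gk²+2Gk+G² determining the critical frequencies. -/
noncomputable def P (G k : ℝ) : ℝ :=
  k ^ 4 - 2 * G * k ^ 2 + 2 * G * k + G ^ 2

/-- The discriminant D(G)=−2y₀(G)+4G+4G/√(2y₀(G)). -/
noncomputable def Dd (G : ℝ) : ℝ :=
  -2 * y₀ G + 4 * G + 4 * G / Real.sqrt (2 * y₀ G)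

/-- The critical frequency closer to the origin, ω̃₊(G)=(−√(2y₀(G))+√(D(G)))/2. -/
noncomputable def ωp (G : ℝ) : ℝ :=
  (-Real.sqrt (2 * y₀ G) + Real.sqrt (Dd G)) / 2

/-- The critical frequency farther from the origin, ω̃₋(G)=(−√(2y₀(G))−√(D(G)))/2. -/
noncomputable def ωm (G : ℝ) : ℝ :=
  (-Real.sqrt (2 * y₀ G) - Real.sqrt (Dd G)) / 2

/-- The focusing-condition function f(V)=−(3/2)·V·ω̃₊(1/V)³−1. -/
noncomputable def fV (V : ℝ) : ℝ :=
  -(3 / 2) * V * (ωp (1 / V)) ^ 3 - 1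

/-!
The quartic `P G` is quadratic in `G`: at `k = (1 - u²) / 2` its two zeros are
`G = (u - 1)(u + 1)³ / 4` and `G = (u + 1)(u - 1)³ / 4`. Ferrari's formulas give `P G (ωp G) = 0`
together with `ωp G < 0` and `(ωp G)² < G`, which singles out the first zero for
`u = √(1 - 2 ωp G)`. Along this rational parametrization of the critical frequency,
`V = 1 / G` is decreasing in `u` while `fV V = 3 (u - 1)² / 4 - 1` is increasing, so `fV` changes
sign exactly once, at `u = 1 + 2 / √3`.
-/

section Resolvent

variable {G : ℝ}

lemma z₀_pos (hG : 0 < G) : 0 < z₀ G := by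
  unfold z₀
  positivity

lemma z₁_pos (hG : 0 < G) : 0 < z₁ G := by
  have := z₀_pos hG
  unfold z₁
  positivity

lemma y₀_pos (hG : 0 < G) : 0 < y₀ G := by
  have := z₁_pos hG
  unfold y₀
  positivity

lemma z₀_sq (hG : 0 ≤ G) :
    z₀ G ^ 2 = 2 * (32 * G ^ 3 + 27 * G ^ 2) * z₀ G - (32 * G ^ 3) ^ 2 := by
  have sq_sqrt_three : √3 ^ 2 = (3 : ℝ) := Real.sq_sqrt (by norm_num)
  have sq_sqrt_disc : √(27 * G ^ 4 + 64 * G ^ 5) ^ 2 = 27 * G ^ 4 + 64 * G ^ 5 :=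
    Real.sq_sqrt (by positivity)
  unfold z₀
  linear_combination
    9 * √(27 * G ^ 4 + 64 * G ^ 5) ^ 2 * sq_sqrt_three + 27 * sq_sqrt_disc

lemma z₁_pow_three (hG : 0 < G) : z₁ G ^ 3 = 32 * G ^ 3 / z₀ G := by
  have two_rpow : ((2 : ℝ) ^ ((5 : ℝ) / 3)) ^ 3 = 32 := by
    rw [← Real.rpow_mul_natCast (by norm_num)]
    norm_num
  have z₀_rpow : (z₀ G ^ (-(1 : ℝ) / 3)) ^ 3 = (z₀ G)⁻¹ := by
    rw [← Real.rpow_mul_natCast (z₀_pos hG).le, ← Real.rpow_neg_one]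
    norm_num
  rw [z₁, mul_pow, mul_pow, two_rpow, z₀_rpow, div_eq_mul_inv]

lemma z₁_pow_three_add_inv (hG : 0 < G) :
    z₁ G ^ 3 + (z₁ G ^ 3)⁻¹ = 2 + 27 / (16 * G) := by
  have := z₀_pos hG
  rw [z₁_pow_three hG]
  field_simp
  linear_combination 16 * z₀_sq hG.le

lemma one_add_add_inv_cubic {K : Type*} [Field K] {z : K} (hz : z ≠ 0) :
    (1 + z + z⁻¹) ^ 3 - 3 * (1 + z + z⁻¹) ^ 2 = z ^ 3 + (z ^ 3)⁻¹ - 2 := by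
  field_simp
  ring

lemma y₀_resolvent_cubic (hG : 0 < G) : 2 * y₀ G ^ 3 = 4 * G * y₀ G ^ 2 + G ^ 2 := by
  have hcubic : (1 + z₁ G + (z₁ G)⁻¹) ^ 3 - 3 * (1 + z₁ G + (z₁ G)⁻¹) ^ 2 = 27 / (16 * G) := by
    rw [one_add_add_inv_cubic (z₁_pos hG).ne', z₁_pow_three_add_inv hG]
    ring
  rw [eq_div_iff (by positivity)] at hcubic
  unfold y₀
  linear_combination G ^ 2 / 27 * hcubic

end Resolvent

section CriticalFrequency

variable {G : ℝ}

/-- The quantity `s = √(2 y₀ G) = -(ωp G + ωm G)`, in terms of which Ferrari's method factors the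
quartic `P G`. -/
noncomputable def ferrariSum (G : ℝ) : ℝ :=
  √(2 * y₀ G)

lemma ferrariSum_pos (hG : 0 < G) : 0 < ferrariSum G :=
  Real.sqrt_pos.2 (mul_pos two_pos (y₀_pos hG))

lemma ferrariSum_sq (hG : 0 < G) : ferrariSum G ^ 2 = 2 * y₀ G :=
  Real.sq_sqrt (mul_pos two_pos (y₀_pos hG)).le

lemma ferrariSum_pow_six (hG : 0 < G) :
    ferrariSum G ^ 6 = 4 * G * ferrariSum G ^ 4 + 4 * G ^ 2 := by
  rw [show ferrariSum G ^ 6 = (ferrariSum G ^ 2) ^ 3 by ring,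
    show ferrariSum G ^ 4 = (ferrariSum G ^ 2) ^ 2 by ring, ferrariSum_sq hG]
  linear_combination 4 * y₀_resolvent_cubic hG

lemma two_mul_lt_ferrariSum_pow_three (hG : 0 < G) : 2 * G < ferrariSum G ^ 3 := by
  have hs := ferrariSum_pos hG
  refine lt_of_pow_lt_pow_left₀ 2 (by positivity) ?_
  calc (2 * G) ^ 2 < 4 * G * ferrariSum G ^ 4 + (2 * G) ^ 2 := lt_add_of_pos_left _ (by positivity)
    _ = (ferrariSum G ^ 3) ^ 2 := by linear_combination -ferrariSum_pow_six hG

lemma Dd_eq (hG : 0 < G) : Dd G = -ferrariSum G ^ 2 + 4 * G + 4 * G / ferrariSum G := by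
  rw [ferrariSum_sq hG, ferrariSum, Dd]
  ring

lemma Dd_nonneg (hG : 0 < G) : 0 ≤ Dd G := by
  have hs := ferrariSum_pos hG
  have hD : Dd G = 4 * G * (ferrariSum G ^ 3 - G) / ferrariSum G ^ 4 := by
    rw [Dd_eq hG]
    field_simp
    linear_combination -ferrariSum_pow_six hG
  have : 0 < ferrariSum G ^ 3 - G := by linarith [two_mul_lt_ferrariSum_pow_three hG]
  rw [hD]
  positivity

lemma ωp_add_ωm (G : ℝ) : ωp G + ωm G = -ferrariSum G := by
  unfold ωp ωm ferrariSum
  ring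

lemma ωp_mul_ωm (hG : 0 < G) :
    ωp G * ωm G = ferrariSum G ^ 2 / 2 - G - G / ferrariSum G := by
  have hD : √(Dd G) ^ 2 = -ferrariSum G ^ 2 + 4 * G + 4 * G / ferrariSum G := by
    rw [Real.sq_sqrt (Dd_nonneg hG), Dd_eq hG]
  unfold ωp ωm
  rw [← ferrariSum]
  linear_combination -hD / 4

lemma P_eq_mul (hG : 0 < G) (k : ℝ) :
    P G k = (k - ωp G) * (k - ωm G) *
      (k ^ 2 - ferrariSum G * k + (ferrariSum G ^ 2 / 2 - G + G / ferrariSum G)) := by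
  have hs := ferrariSum_pos hG
  have vieta : (k - ωp G) * (k - ωm G) =
      k ^ 2 + ferrariSum G * k + (ferrariSum G ^ 2 / 2 - G - G / ferrariSum G) := by
    linear_combination ωp_mul_ωm hG - k * ωp_add_ωm G
  rw [vieta, P]
  field_simp
  linear_combination -ferrariSum_pow_six hG

lemma P_ωp (hG : 0 < G) : P G (ωp G) = 0 := by
  rw [P_eq_mul hG, sub_self, zero_mul, zero_mul]

lemma neg_of_P_eq_zero {k : ℝ} (hG : 0 < G) (hk : P G k = 0) : k < 0 := by
  have hk' : (k ^ 2 - G) ^ 2 = -(2 * G * k) := by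
    unfold P at hk
    linear_combination hk
  have hk_nonpos : k ≤ 0 := by
    have : 2 * G * k ≤ 0 := neg_nonneg.1 (hk' ▸ sq_nonneg (k ^ 2 - G))
    exact nonpos_of_mul_nonpos_right this (by positivity)
  refine hk_nonpos.lt_of_ne ?_
  rintro rfl
  simp [hG.ne'] at hk'

lemma ωm_le_ωp (G : ℝ) : ωm G ≤ ωp G := by
  unfold ωm ωp
  linarith [Real.sqrt_nonneg (Dd G)]

lemma ωp_sq_lt (hG : 0 < G) : ωp G ^ 2 < G := by
  have hs := ferrariSum_pos hG
  have hprod : ωp G * ωm G = G - G * (ferrariSum G ^ 3 - 2 * G) / ferrariSum G ^ 4 := by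
    rw [ωp_mul_ωm hG]
    field_simp
    linear_combination ferrariSum_pow_six hG
  have hgap : 0 < G * (ferrariSum G ^ 3 - 2 * G) / ferrariSum G ^ 4 :=
    div_pos (mul_pos hG (sub_pos.2 (two_mul_lt_ferrariSum_pow_three hG))) (pow_pos hs 4)
  calc ωp G ^ 2 = ωp G * ωp G := sq _
    _ ≤ ωp G * ωm G :=
      mul_le_mul_of_nonpos_left (ωm_le_ωp G) (neg_of_P_eq_zero hG (P_ωp hG)).le
    _ < G := by linarith

end CriticalFrequency

section Parametrization

/-- The value of `G = 1 / V` at which the critical frequency `ωp G` equals `(1 - u ^ 2) / 2`, for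
`1 < u`. -/
noncomputable def frequencyCurve (u : ℝ) : ℝ :=
  (u - 1) * (u + 1) ^ 3 / 4

lemma frequencyCurve_strictMonoOn : StrictMonoOn frequencyCurve (Set.Ici 1) := by
  intro u (hu : 1 ≤ u) v _ huv
  have : 0 ≤ u - 1 := sub_nonneg.2 hu
  have : 0 < v - 1 := sub_pos.2 (hu.trans_lt huv)
  have : 0 < u + 1 := by linarith
  unfold frequencyCurve
  gcongr

lemma P_one_sub_sq_div_two (G u : ℝ) :
    P G ((1 - u ^ 2) / 2) = (G - frequencyCurve u) * (G - (u + 1) * (u - 1) ^ 3 / 4) := by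
  unfold P frequencyCurve
  ring

lemma eq_frequencyCurve_of_P_eq_zero {G u : ℝ} (hu : 1 < u) (hP : P G ((1 - u ^ 2) / 2) = 0)
    (hlt : ((1 - u ^ 2) / 2) ^ 2 < G) : G = frequencyCurve u := by
  have hother : (u + 1) * (u - 1) ^ 3 / 4 < G := by
    have : 0 < u - 1 := sub_pos.2 hu
    calc (u + 1) * (u - 1) ^ 3 / 4
        < (u + 1) * (u - 1) ^ 3 / 4 + (u + 1) * (u - 1) ^ 2 / 2 :=
          lt_add_of_pos_right _ (by positivity)
      _ = ((1 - u ^ 2) / 2) ^ 2 := by ring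
      _ < G := hlt
  rw [P_one_sub_sq_div_two] at hP
  exact sub_eq_zero.1 ((mul_eq_zero.1 hP).resolve_right (sub_pos.2 hother).ne')

lemma exists_frequencyCurve_eq {G : ℝ} (hG : 0 < G) :
    ∃ u, 1 < u ∧ G = frequencyCurve u ∧ ωp G = (1 - u ^ 2) / 2 := by
  have hneg := neg_of_P_eq_zero hG (P_ωp hG)
  have hu : 1 < √(1 - 2 * ωp G) := Real.lt_sqrt_of_sq_lt (by linarith)
  have hω : ωp G = (1 - √(1 - 2 * ωp G) ^ 2) / 2 := by
    rw [Real.sq_sqrt (by linarith)]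
    ring
  exact ⟨_, hu, eq_frequencyCurve_of_P_eq_zero hu (hω ▸ P_ωp hG) (hω ▸ ωp_sq_lt hG), hω⟩

lemma exists_fV_eq {V : ℝ} (hV : 0 < V) :
    ∃ u, 1 < u ∧ V⁻¹ = frequencyCurve u ∧ fV V = 3 / 4 * (u - 1) ^ 2 - 1 := by
  obtain ⟨u, hu, hcurve, hω⟩ := exists_frequencyCurve_eq (inv_pos.2 hV)
  refine ⟨u, hu, hcurve, ?_⟩
  have hV_mul : V * frequencyCurve u = 1 := by rw [← hcurve, mul_inv_cancel₀ hV.ne']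
  rw [fV, one_div, hω]
  unfold frequencyCurve at hV_mul
  linear_combination 3 / 4 * (u - 1) ^ 2 * hV_mul

end Parametrization

lemma frequencyCurve_one_add_two_div_sqrt_three :
    frequencyCurve (1 + 2 / √3) = (9 * (3 * √3 - 5) / 16)⁻¹ := by
  have h3 : √3 ^ 2 = (3 : ℝ) := Real.sq_sqrt (by norm_num)
  have hinv : 2 / √3 = 2 * √3 / 3 := by
    rw [div_eq_div_iff (by positivity) three_ne_zero]
    linear_combination -2 * h3
  have hcurve : frequencyCurve (1 + 2 / √3) = 8 * (5 + 3 * √3) / 9 := by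
    rw [hinv, frequencyCurve]
    linear_combination 4 / 81 * (√3 ^ 2 + 9 * √3 + 30) * h3
  refine eq_inv_of_mul_eq_one_left ?_
  rw [hcurve]
  linear_combination 9 / 2 * h3

theorem focusing_fails_large_V_general {V : ℝ} (hV : 0 < V) :
    fV V < 0 ↔ 9 * (3 * √3 - 5) / 16 < V := by
  obtain ⟨u, hu, hcurve, hf⟩ := exists_fV_eq hV
  have hroot : (2 / √3) ^ 2 = 4 / 3 := by rw [div_pow, Real.sq_sqrt (by norm_num)]; norm_num
  have hV₀ : 0 < 9 * (3 * √3 - 5) / 16 := by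
    have : (5 : ℝ) / 3 < √3 := Real.lt_sqrt_of_sq_lt (by norm_num)
    linarith
  have hu₀ : 1 ≤ 1 + 2 / √3 := le_add_of_nonneg_right (by positivity)
  calc fV V < 0 ↔ (u - 1) ^ 2 < (2 / √3) ^ 2 := by
        rw [hf, hroot]
        constructor <;> intro h <;> linarith
    _ ↔ u < 1 + 2 / √3 := by
        rw [sq_lt_sq₀ (sub_nonneg.2 hu.le) (by positivity), sub_lt_iff_lt_add']
    _ ↔ frequencyCurve u < frequencyCurve (1 + 2 / √3) :=
        (frequencyCurve_strictMonoOn.lt_iff_lt hu.le hu₀).symm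
    _ ↔ 9 * (3 * √3 - 5) / 16 < V := by
        rw [← hcurve, frequencyCurve_one_add_two_div_sqrt_three, inv_lt_inv₀ hV hV₀]

/-- For V>10⁶ the focusing-condition function is negative: f(V)<0. -/
theorem focusing_fails_large_V (V : ℝ) (hV : (10 : ℝ) ^ 6 < V) : fV V < 0 := by
  have : √3 < (2 : ℝ) := (Real.sqrt_lt' two_pos).2 (by norm_num)
  exact (focusing_fails_large_V_general (by linarith)).2 (by linarith)
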